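/- As n → ∞, var(vol(T_n)) = (7·log n)/(27n²) + O(n^{−2}); that is, there exist a constant C > 0 and n₀ such that |var(vol(T_n)) − 7·log n/(27n²)| ≤ C/n² for all n ≥ n₀. -/

import Mathlib

open MeasureTheory

noncomputable section

/-- The triangle with vertices (0,0), (1,0), (0,1). -/
def T : Set (ℝ × ℝ) := convexHull ℝ {(0, 0), (1, 0), (0, 1)}

/-- The uniform distribution on `T`: twice Lebesgue measure restricted to `T`. -/
def μT : Measure (ℝ × ℝ) := (2 : ENNReal) • (volume.restrict T)

/-- Joint law of `n` independent uniform points in `T`. -/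
def P (n : ℕ) : Measure (Fin n → ℝ × ℝ) := Measure.pi fun _ => μT

/-- The random convex chain: convex hull of the points together with `(1,0)` and `(0,1)`. -/
def Tchain (n : ℕ) (ω : Fin n → ℝ × ℝ) : Set (ℝ × ℝ) :=
  convexHull ℝ (Set.range ω ∪ {(1, 0), (0, 1)})

/-- Normalized area `V_n = 2 vol(T_n)`. -/
def V (n : ℕ) (ω : Fin n → ℝ × ℝ) : ℝ := 2 * (volume (Tchain n ω)).toReal

/-- Number of vertices of `T_n` other than the two corners. -/
def N (n : ℕ) (ω : Fin n → ℝ × ℝ) : ℕ :=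
  (Set.extremePoints ℝ (Tchain n ω)).ncard - 2

/-- Normalized moments `q_{n,k} = C(n+k,k) E[V_n^k]`. -/
def q (n k : ℕ) : ℝ := ((n + k).choose k : ℝ) * ∫ ω, (V n ω) ^ k ∂ P n

/-- Probability generating function of `N_n`. -/
def G (n : ℕ) (t : ℝ) : ℝ := ∫ ω, t ^ (N n ω) ∂ P n

/-- Harmonic number. -/
def H (j : ℕ) : ℝ := ∑ i ∈ Finset.range j, 1 / ((i : ℝ) + 1)

/-- Generalized harmonic number of order 2. -/
def H2 (j : ℕ) : ℝ := ∑ i ∈ Finset.range j, 1 / ((i : ℝ) + 1) ^ 2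

/-- `c(k,ℓ)`: elementary symmetric polynomial `e_k` of `2/(j(j+1))`, `j = 1,…,ℓ`. -/
def c (k l : ℕ) : ℝ :=
  ∑ S ∈ (Finset.Icc 1 l).powersetCard k, ∏ j ∈ S, 2 / ((j : ℝ) * ((j : ℝ) + 1))

/-!
The points of the sample other than the chain vertex next to `(1, 0)` are, given that vertex,
uniform in the part of `T` above the line through it and `(1, 0)`. A shear carries this part back
to `T` and the vertex to a point `(z, 0)` of the base. The hull then splits along the segment from
`(z, 0)` to `(0, 1)`: on one side it is the whole triangle `(z, 0), (1, 0), (0, 1)`, on the other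
side it is a chain of the same kind on the points falling into the affine copy
`(0, 0), (z, 0), (0, 1)` of `T`, a binomial thinning of the sample. Integrating out the vertex gives
a recursion for the moments, whose kernels are Beta integrals.

In terms of `q n k` the recursion is a convolution with binomial coefficients, that is, an iterated
partial sum, so its second difference is a local recurrence. For `k = 1, 2` this is solved by
harmonic numbers. In the variance the terms of order `log n / n` and `(log n)² / n²`
cancel, and `H n = log n + O(1)` leaves `(28/27) log n / n² + O(n⁻²)` for `V n = 2 vol(T_n)`.
-/

section Convexity

variable {E : Type*} [AddCommGroup E] [Module ℝ E]

lemma exists_mem_segment_map_eq (φ : E →ᵃ[ℝ] ℝ) {x y : E} {t : ℝ}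
    (hx : φ x ≤ t) (hy : t ≤ φ y) : ∃ w ∈ segment ℝ x y, φ w = t := by
  have ht : t ∈ φ '' segment ℝ x y := by
    rw [image_segment ℝ φ x y, segment_eq_Icc (hx.trans hy)]
    exact ⟨hx, hy⟩
  exact ht

lemma mem_segment_of_mem_segment_right {u v w p : E}
    (hp : p ∈ segment ℝ u v) (hw : w ∈ segment ℝ p v) : p ∈ segment ℝ u w := by
  rw [mem_segment_iff_wbtw] at hp hw ⊢
  exact hp.trans_right_left hw

lemma segment_subset_union_of_separating_level {A B C : Set E} (hA : Convex ℝ A)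
    (hB : Convex ℝ B) (hC : Convex ℝ C) (φ : E →ᵃ[ℝ] ℝ) (t : ℝ) (hAC : A ⊆ C) (hBC : B ⊆ C)
    (hAt : ∀ x ∈ A, φ x ≤ t) (hBt : ∀ x ∈ B, t ≤ φ x)
    (hlevel : ∀ x ∈ C, φ x = t → x ∈ A ∩ B) {u v : E} (hu : u ∈ A) (hv : v ∈ B) :
    segment ℝ u v ⊆ A ∪ B := by
  intro p hp
  have hpC : p ∈ C := hC.segment_subset (hAC hu) (hBC hv) hp
  rcases le_total (φ p) t with hpt | hpt
  · obtain ⟨w, hw, hwt⟩ := exists_mem_segment_map_eq φ hpt (hBt v hv)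
    have hwA : w ∈ A := (hlevel w (hC.segment_subset hpC (hBC hv) hw) hwt).1
    exact .inl (hA.segment_subset hu hwA (mem_segment_of_mem_segment_right hp hw))
  · obtain ⟨w, hw, hwt⟩ := exists_mem_segment_map_eq φ (hAt u hu) hpt
    have hwB : w ∈ B := (hlevel w (hC.segment_subset (hAC hu) hpC hw) hwt).2
    rw [segment_symm] at hp hw
    exact .inr (hB.segment_subset hv hwB (mem_segment_of_mem_segment_right hp hw))

lemma convex_union_of_separating_level {A B C : Set E} (hA : Convex ℝ A) (hB : Convex ℝ B)
    (hC : Convex ℝ C) (φ : E →ᵃ[ℝ] ℝ) (t : ℝ) (hAC : A ⊆ C) (hBC : B ⊆ C)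
    (hAt : ∀ x ∈ A, φ x ≤ t) (hBt : ∀ x ∈ B, t ≤ φ x)
    (hlevel : ∀ x ∈ C, φ x = t → x ∈ A ∩ B) : Convex ℝ (A ∪ B) := by
  have hAB : ∀ {u v}, u ∈ A → v ∈ B → segment ℝ u v ⊆ A ∪ B :=
    segment_subset_union_of_separating_level hA hB hC φ t hAC hBC hAt hBt hlevel
  rw [convex_iff_segment_subset]
  rintro u (hu | hu) v (hv | hv)
  · exact (hA.segment_subset hu hv).trans Set.subset_union_left
  · exact hAB hu hv
  · exact segment_symm ℝ u v ▸ hAB hv hu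
  · exact (hB.segment_subset hu hv).trans Set.subset_union_right

end Convexity

section MeasurableHull

variable {ι E : Type*} [AddCommGroup E] [Module ℝ E]

lemma convexHull_range_eq_image_stdSimplex [Fintype ι] (v : ι → E) :
    convexHull ℝ (Set.range v) = (fun w : ι → ℝ => ∑ i, w i • v i) '' stdSimplex ℝ ι := by
  classical
  have hsum : (fun w : ι → ℝ => ∑ i, w i • v i) = Fintype.linearCombination ℝ v := by
    ext w; simp only [Fintype.linearCombination_apply]
  have hrange : Set.range v
      = Fintype.linearCombination ℝ v '' Set.range fun i : ι => Pi.single i (1 : ℝ) := by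
    rw [← Set.range_comp]
    congr 1
    ext i
    simp
  rw [hsum, hrange, ← LinearMap.image_convexHull, convexHull_rangle_single_eq_stdSimplex]

lemma isClosed_setOf_mem_convexHull_range [Finite ι] [TopologicalSpace E] [T2Space E]
    [ContinuousAdd E] [ContinuousSMul ℝ E] :
    IsClosed {p : (ι → E) × E | p.2 ∈ convexHull ℝ (Set.range p.1)} := by
  cases nonempty_fintype ι
  have hgraph : IsClosed {p : stdSimplex ℝ ι × ((ι → E) × E) |
      ∑ i, p.1.1 i • p.2.1 i = p.2.2} := by
    refine isClosed_eq (continuous_finsetSum _ fun i _ => ?_) (by fun_prop)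
    have hcoord : Continuous fun p : stdSimplex ℝ ι × ((ι → E) × E) => p.1.1 i :=
      (continuous_apply i).comp (continuous_subtype_val.comp continuous_fst)
    exact hcoord.smul (by fun_prop)
  convert isClosedMap_snd_of_compactSpace _ hgraph using 1
  ext ⟨v, x⟩
  simp [convexHull_range_eq_image_stdSimplex]

lemma measurable_measure_convexHull_range [Finite ι] [TopologicalSpace E] [T2Space E]
    [ContinuousAdd E] [ContinuousSMul ℝ E] [SecondCountableTopology E] [MeasurableSpace E]
    [BorelSpace E] (μ : Measure E) [SFinite μ] :
    Measurable fun ω : ι → E => μ (convexHull ℝ (Set.range ω)) :=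
  measurable_measure_prodMk_left isClosed_setOf_mem_convexHull_range.measurableSet

end MeasurableHull

section Samples

open Finset.HasAntidiagonal (antidiagonal)

variable {E : Type*} [MeasurableSpace E]

/-- A functional `F` of point sets is measurable on samples if `F {ω 0, …, ω (n - 1)}` depends
measurably on the sample `ω` for every sample size `n`. -/
def MeasurableOnSamples (F : Set E → ENNReal) : Prop :=
  ∀ n : ℕ, Measurable fun ω : Fin n → E => F (Set.range ω)

lemma measurable_fin_cons (n : ℕ) :
    Measurable fun p : E × (Fin n → E) => (Fin.cons p.1 p.2 : Fin (n + 1) → E) := by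
  refine measurable_pi_iff.2 (Fin.cases ?_ fun i => ?_)
  · simpa only [Fin.cons_zero] using measurable_fst
  · simpa only [Fin.cons_succ] using measurable_snd.eval

namespace MeasurableOnSamples

variable {F : Set E → ENNReal} (hF : MeasurableOnSamples F)
include hF

lemma measurable_insert (n : ℕ) :
    Measurable fun p : E × (Fin n → E) => F (insert p.1 (Set.range p.2)) := by
  simpa only [Function.comp_def, Fin.range_cons] using (hF (n + 1)).comp (measurable_fin_cons n)

lemma insert (x : E) : MeasurableOnSamples fun R => F (insert x R) := fun n =>
  (hF.measurable_insert n).comp measurable_prodMk_left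

lemma measurable_union_inter {D : Set E} (hD : MeasurableSet D) (m k : ℕ) :
    Measurable fun p : (Fin k → E) × (Fin m → E) => F (Set.range p.1 ∪ Set.range p.2 ∩ D) := by
  classical
  induction m generalizing k with
  | zero =>
    simpa only [Set.range_eq_empty, Set.empty_inter, Set.union_empty, Function.comp_def] using
      (hF k).comp measurable_fst
  | succ m ih =>
    have hhead : Measurable fun p : (Fin k → E) × (Fin (m + 1) → E) => p.2 0 :=
      measurable_snd.eval
    have hheadD : MeasurableSet {p : (Fin k → E) × (Fin (m + 1) → E) | p.2 0 ∈ D} := hhead hD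
    have htail : Measurable fun p : (Fin k → E) × (Fin (m + 1) → E) => Fin.tail p.2 :=
      measurable_pi_iff.2 fun i => measurable_snd.eval
    have hcons := (measurable_fin_cons k).comp (hhead.prodMk measurable_fst)
    have hsplit : (fun p : (Fin k → E) × (Fin (m + 1) → E) =>
          F (Set.range p.1 ∪ Set.range p.2 ∩ D)) = fun p => if p.2 0 ∈ D then
          F (Set.range (Fin.cons (p.2 0) p.1 : Fin (k + 1) → E) ∪ Set.range (Fin.tail p.2) ∩ D)
        else F (Set.range p.1 ∪ Set.range (Fin.tail p.2) ∩ D) := by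
      ext p
      have hrange : Set.range p.2 = Insert.insert (p.2 0) (Set.range (Fin.tail p.2)) := by
        rw [← Fin.range_cons, Fin.cons_self_tail]
      rw [hrange]
      split_ifs with hp
      · rw [Set.insert_inter_of_mem hp, Fin.range_cons, Set.insert_union, Set.union_insert]
      · rw [Set.insert_inter_of_notMem hp]
    rw [hsplit]
    exact .ite hheadD ((ih (k + 1)).comp (hcons.prodMk htail))
      ((ih k).comp (measurable_fst.prodMk htail))

lemma measurable_inter {D : Set E} (hD : MeasurableSet D) (m : ℕ) :
    Measurable fun ω : Fin m → E => F (Set.range ω ∩ D) := by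
  have h := (hF.measurable_union_inter hD m 0).comp (measurable_prodMk_left (x := Fin.elim0))
  simpa only [Function.comp_def, Set.range_eq_empty, Set.empty_union] using h

end MeasurableOnSamples

variable {μ : Measure E} [SigmaFinite μ]

lemma lintegral_pi_insertNth {n : ℕ} (i : Fin (n + 1)) {g : (Fin (n + 1) → E) → ENNReal}
    (hg : Measurable g) :
    ∫⁻ ω, g ω ∂(Measure.pi fun _ : Fin (n + 1) => μ)
      = ∫⁻ x, ∫⁻ ω : Fin n → E, g (i.insertNth x ω) ∂(Measure.pi fun _ => μ) ∂μ := by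
  have he := (measurePreserving_piFinSuccAbove (fun _ : Fin (n + 1) => μ) i).symm
  rw [← he.lintegral_comp_emb (MeasurableEquiv.measurableEmbedding _) g]
  exact lintegral_prod _ (hg.comp he.measurable).aemeasurable

lemma lintegral_pi_range_succ {F : Set E → ENNReal} (hF : MeasurableOnSamples F) (n : ℕ) :
    ∫⁻ ω, F (Set.range ω) ∂(Measure.pi fun _ : Fin (n + 1) => μ)
      = ∫⁻ x, ∫⁻ ω : Fin n → E, F (insert x (Set.range ω)) ∂(Measure.pi fun _ => μ) ∂μ := by
  simp only [lintegral_pi_insertNth 0 (hF _), Fin.range_insertNth]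
  rfl

lemma lintegral_pi_range_inter_succ {F : Set E → ENNReal} (hF : MeasurableOnSamples F) {D : Set E}
    (hD : MeasurableSet D) (n : ℕ) :
    ∫⁻ ω, F (Set.range ω ∩ D) ∂(Measure.pi fun _ : Fin (n + 1) => μ)
      = (∫⁻ x in D, ∫⁻ ω : Fin n → E, F (insert x (Set.range ω ∩ D)) ∂(Measure.pi fun _ => μ) ∂μ)
        + μ Dᶜ * ∫⁻ ω, F (Set.range ω ∩ D) ∂(Measure.pi fun _ : Fin n => μ) := by
  have hcons (x : E) (ω : Fin n → E) : Set.range ((0 : Fin (n + 1)).insertNth x ω) ∩ D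
      = insert x (Set.range ω) ∩ D := by rw [Fin.range_insertNth]; rfl
  rw [lintegral_pi_insertNth 0 (hF.measurable_inter hD _), ← lintegral_add_compl _ hD]
  congr 1
  · refine setLIntegral_congr_fun hD fun x hx => lintegral_congr fun ω => ?_
    rw [hcons, Set.insert_inter_of_mem hx]
  · rw [mul_comm, ← setLIntegral_const]
    refine setLIntegral_congr_fun hD.compl fun x hx => lintegral_congr fun ω => ?_
    rw [hcons, Set.insert_inter_of_notMem hx]

theorem lintegral_pi_range_inter {F : Set E → ENNReal} (hF : MeasurableOnSamples F) {D : Set E}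
    (hD : MeasurableSet D) (m : ℕ) :
    ∫⁻ ω, F (Set.range ω ∩ D) ∂(Measure.pi fun _ : Fin m => μ)
      = ∑ ij ∈ antidiagonal m, (m.choose ij.1 : ENNReal) *
          (μ Dᶜ ^ ij.2 * ∫⁻ ω, F (Set.range ω) ∂(Measure.pi fun _ : Fin ij.1 => μ.restrict D)) := by
  induction m generalizing F with
  | zero => simp [Set.range_eq_empty]
  | succ m ih =>
    have hmeas (j : ℕ) : Measurable fun x =>
        ∫⁻ ω, F (insert x (Set.range ω)) ∂(Measure.pi fun _ : Fin j => μ.restrict D) :=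
      (hF.measurable_insert j).lintegral_prod_right'
    rw [Finset.sum_antidiagonal_choose_succ_mul fun i j => μ Dᶜ ^ j *
        ∫⁻ ω, F (Set.range ω) ∂(Measure.pi fun _ : Fin i => μ.restrict D),
      lintegral_pi_range_inter_succ hF hD, ih hF, add_comm]
    congr 1
    · simp only [Finset.mul_sum, pow_succ]
      exact Finset.sum_congr rfl fun ij _ => by ring
    · simp only [ih (hF.insert _)]
      rw [lintegral_finsetSum _ fun ij _ => ((hmeas ij.1).const_mul _).const_mul _]
      refine Finset.sum_congr rfl fun ij hij => ?_
      rw [lintegral_const_mul _ ((hmeas ij.1).const_mul _), lintegral_const_mul _ (hmeas ij.1),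
        lintegral_pi_range_succ hF,
        Nat.choose_symm_of_eq_add (Finset.HasAntidiagonal.mem_antidiagonal.1 hij).symm]

lemma lintegral_pi_smul_map (c : NNReal) (ν : Measure E) [IsFiniteMeasure ν] {f : E → E}
    (hf : Measurable f) {n : ℕ} {g : (Fin n → E) → ENNReal} (hg : Measurable g) :
    ∫⁻ ω, g ω ∂(Measure.pi fun _ : Fin n => c • ν.map f)
      = c ^ n * ∫⁻ ω, g (f ∘ ω) ∂(Measure.pi fun _ : Fin n => ν) := by
  have hpi : (Measure.pi fun _ : Fin n => c • ν.map f)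
      = c ^ n • (Measure.pi fun _ : Fin n => ν).map fun ω i => f (ω i) := by
    rw [Measure.pi_map_pi fun _ => hf.aemeasurable]
    refine Measure.pi_eq fun s _ => ?_
    simp only [Measure.smul_apply, Measure.pi_pi, ENNReal.smul_def, smul_eq_mul,
      Finset.prod_mul_distrib, Finset.prod_const, Finset.card_univ, Fintype.card_fin,
      ENNReal.coe_pow]
  rw [hpi, lintegral_smul_measure, lintegral_map hg (by fun_prop), ENNReal.smul_def, smul_eq_mul,
    ENNReal.coe_pow]
  rfl

section Argmin

variable {α : Type*} [LinearOrder α] [TopologicalSpace α] [OrderClosedTopology α]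
  [SecondCountableTopology α] [MeasurableSpace α] [OpensMeasurableSpace α] {κ : E → α}

lemma measurable_setLIntegral_forall_le (hκ : Measurable κ) {n : ℕ} {ν : Measure (Fin n → E)}
    [SFinite ν] {g : E × (Fin n → E) → ENNReal} (hg : Measurable g) :
    Measurable fun x => ∫⁻ ω in {ω | ∀ i, κ x ≤ κ (ω i)}, g (x, ω) ∂ν := by
  have hA : MeasurableSet {p : E × (Fin n → E) | ∀ i, κ p.1 ≤ κ (p.2 i)} := by
    simp only [Set.ofPred_forall]
    exact .iInter fun i => measurableSet_le (hκ.comp measurable_fst)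
      (hκ.comp measurable_snd.eval)
  have h := (hg.indicator hA).lintegral_prod_right' (ν := ν)
  convert h using 2 with x
  exact (lintegral_indicator (measurable_prodMk_left hA) _).symm

lemma aedisjoint_argmin (hκ : Measurable κ) (hnull : ∀ t, μ {x | κ x = t} = 0) {n : ℕ} :
    Pairwise (Function.onFun (AEDisjoint (Measure.pi fun _ : Fin (n + 1) => μ))
      fun i => {ω : Fin (n + 1) → E | ∀ j, κ (ω i) ≤ κ (ω j)}) := by
  intro i j hij
  obtain ⟨k, rfl⟩ := Fin.exists_succAbove_eq hij.symm
  have hties : MeasurableSet {ω : Fin (n + 1) → E | κ (ω (i.succAbove k)) = κ (ω i)} :=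
    measurableSet_eq_fun (by fun_prop) (by fun_prop)
  have hnull_ties : Measure.pi (fun _ : Fin (n + 1) => μ)
      {ω | κ (ω (i.succAbove k)) = κ (ω i)} = 0 := by
    rw [← lintegral_indicator_one hties,
      lintegral_pi_insertNth i (measurable_one.indicator hties),
      ← lintegral_zero (μ := μ)]
    refine lintegral_congr fun x => ?_
    have hx : Measure.pi (fun _ : Fin n => μ) {ω | κ (ω k) = κ x} = 0 :=
      Measure.pi_eval_preimage_null (fun _ => μ) (i := k) (hnull (κ x))
    rw [← hx, ← lintegral_indicator_one (measurableSet_eq_fun (by fun_prop) measurable_const)]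
    refine lintegral_congr fun ω => ?_
    simp [Set.indicator]
  exact measure_mono_null (fun ω hω => le_antisymm (hω.2 _) (hω.1 _)) hnull_ties

theorem lintegral_pi_range_succ_eq_argmin {F : Set E → ENNReal} (hF : MeasurableOnSamples F)
    (hκ : Measurable κ) (hnull : ∀ t, μ {x | κ x = t} = 0) (n : ℕ) :
    ∫⁻ ω, F (Set.range ω) ∂(Measure.pi fun _ : Fin (n + 1) => μ)
      = (n + 1) * ∫⁻ x, ∫⁻ ω in {ω : Fin n → E | ∀ i, κ x ≤ κ (ω i)},
          F (insert x (Set.range ω)) ∂(Measure.pi fun _ => μ) ∂μ := by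
  set A : Fin (n + 1) → Set (Fin (n + 1) → E) := fun i => {ω | ∀ j, κ (ω i) ≤ κ (ω j)}
  have hA : ∀ i, MeasurableSet (A i) := fun i => by
    simp only [A, Set.ofPred_forall]
    exact .iInter fun j => measurableSet_le (by fun_prop) (by fun_prop)
  have hcover : ⋃ i, A i = Set.univ := Set.eq_univ_of_forall fun ω =>
    Set.mem_iUnion.2 (Finite.exists_min fun i => κ (ω i))
  have hpiece (i : Fin (n + 1)) :
      ∫⁻ ω in A i, F (Set.range ω) ∂(Measure.pi fun _ : Fin (n + 1) => μ)
        = ∫⁻ x, ∫⁻ ω in {ω : Fin n → E | ∀ i, κ x ≤ κ (ω i)},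
          F (insert x (Set.range ω)) ∂(Measure.pi fun _ => μ) ∂μ := by
    rw [← lintegral_indicator (hA i), lintegral_pi_insertNth i ((hF _).indicator (hA i))]
    refine lintegral_congr fun x => ?_
    have hB : MeasurableSet {ω : Fin n → E | ∀ i, κ x ≤ κ (ω i)} := by
      simp only [Set.ofPred_forall]
      exact .iInter fun j => measurableSet_le measurable_const (by fun_prop)
    rw [← lintegral_indicator hB]
    refine lintegral_congr fun ω => ?_
    have hmem : i.insertNth x ω ∈ A i ↔ ω ∈ {ω : Fin n → E | ∀ i, κ x ≤ κ (ω i)} := by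
      simp [A, Fin.forall_iff_succAbove i]
    simp only [Set.indicator, hmem, Fin.range_insertNth]
    rfl
  rw [← setLIntegral_univ, ← hcover, lintegral_iUnion₀ (fun i => (hA i).nullMeasurableSet)
    (aedisjoint_argmin hκ hnull), tsum_fintype, Finset.sum_congr rfl fun i _ => hpiece i]
  simp

end Argmin

end Samples

section AffineImage

variable {E : Type*} [NormedAddCommGroup E] [NormedSpace ℝ E] [MeasurableSpace E] [BorelSpace E]
  [FiniteDimensional ℝ E] (μ : Measure E) [μ.IsAddHaarMeasure] (f : E →ᵃ[ℝ] E)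

lemma addHaar_image_affineMap (s : Set E) :
    μ (f '' s) = ENNReal.ofReal |LinearMap.det f.linear| * μ s := by
  have hf : f '' s = (fun y => y + f 0) '' (f.linear '' s) := by
    rw [Set.image_image, f.decomp]
    simp
  rw [hf, Set.image_add_right, measure_preimage_add_right, Measure.addHaar_image_linearMap]

lemma restrict_image_affineMap (s : Set E) :
    μ.restrict (f '' s) = ENNReal.ofReal |LinearMap.det f.linear| • (μ.restrict s).map f := by
  have hf : Measurable f := f.continuous_of_finiteDimensional.measurable
  ext A hA
  rw [Measure.restrict_apply hA, Measure.smul_apply, Measure.map_apply hf hA,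
    Measure.restrict_apply (hf hA), ← Set.image_preimage_inter, addHaar_image_affineMap,
    smul_eq_mul]

end AffineImage

section Triangle

lemma mem_T (p : ℝ × ℝ) : p ∈ T ↔ 0 ≤ p.1 ∧ 0 ≤ p.2 ∧ p.1 + p.2 ≤ 1 := by
  constructor
  · have hconvex : Convex ℝ {p : ℝ × ℝ | 0 ≤ p.1 ∧ 0 ≤ p.2 ∧ p.1 + p.2 ≤ 1} := by
      rintro p ⟨hp1, hp2, hp⟩ p' ⟨hp1', hp2', hp'⟩ s t hs ht hst
      simp only [Prod.fst_add, Prod.smul_fst, Prod.snd_add, Prod.smul_snd, smul_eq_mul,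
        Set.mem_ofPred_eq]
      refine ⟨by positivity, by positivity, ?_⟩
      nlinarith
    refine fun hp => convexHull_min ?_ hconvex hp
    rintro p (rfl | rfl | rfl) <;> norm_num
  · rintro ⟨hx, hy, hxy⟩
    have hweights : ∀ i ∈ Finset.univ, 0 ≤ ![1 - p.1 - p.2, p.1, p.2] i := by
      intro i _
      fin_cases i
      exacts [by simpa using by linarith, hx, hy]
    have hvertices : ∀ i ∈ Finset.univ, ![((0 : ℝ), (0 : ℝ)), (1, 0), (0, 1)] i ∈ T := by
      intro i _
      refine subset_convexHull ℝ _ ?_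
      fin_cases i <;> simp
    have hsum := (convex_convexHull ℝ _).sum_mem hweights
      (by simp [Fin.sum_univ_three, sub_sub, add_assoc]) hvertices
    simpa [T, Fin.sum_univ_three] using hsum

lemma convex_T : Convex ℝ T := convex_convexHull ℝ _

lemma measurableSet_T : MeasurableSet T := by
  have hT : T = {p | 0 ≤ p.1} ∩ ({p | 0 ≤ p.2} ∩ {p | p.1 + p.2 ≤ 1}) := Set.ext mem_T
  rw [hT]
  measurability

lemma lintegral_eq_lintegral_slope {g : ℝ × ℝ → ENNReal} (hg : Measurable g) :
    ∫⁻ p, g p = ∫⁻ r : ℝ, ENNReal.ofReal |r| * ∫⁻ s : ℝ, g (1 - r, r * s) := by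
  rw [Measure.volume_eq_prod, lintegral_prod _ hg.aemeasurable,
    ← lintegral_sub_left_eq_self _ (1 : ℝ)]
  refine lintegral_congr_ae ?_
  filter_upwards [volume.ae_ne (0 : ℝ)] with r hr
  rw [← lintegral_map (f := fun y => g (1 - r, y)) (by fun_prop) (measurable_const_mul r),
    ← smul_eq_mul, ← lintegral_smul_measure, Real.smul_map_volume_mul_left hr]

lemma slope_mem_T_iff {r s : ℝ} (hr : r ≠ 0) :
    (1 - r, r * s) ∈ T ↔ r ∈ Set.Icc 0 1 ∧ s ∈ Set.Icc 0 1 := by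
  simp only [mem_T, Set.mem_Icc]
  constructor
  · rintro ⟨hr1, hrs0, hrs⟩
    have hr0 : 0 < r := by
      refine lt_of_le_of_ne ?_ hr.symm
      linarith
    exact ⟨⟨hr0.le, by linarith⟩, nonneg_of_mul_nonneg_right hrs0 hr0, by nlinarith⟩
  · rintro ⟨⟨hr0, hr1⟩, hs0, hs1⟩
    exact ⟨by linarith, by positivity, by nlinarith⟩

lemma lintegral_μT {g : ℝ × ℝ → ENNReal} (hg : Measurable g) :
    ∫⁻ p, g p ∂μT = 2 * ∫⁻ r in Set.Ioo (0 : ℝ) 1,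
      ENNReal.ofReal r * ∫⁻ s in Set.Ioo (0 : ℝ) 1, g (1 - r, r * s) := by
  simp only [setLIntegral_congr (Ioo_ae_eq_Icc (a := (0 : ℝ)) (b := 1))]
  rw [μT, lintegral_smul_measure, ← lintegral_indicator measurableSet_T, smul_eq_mul,
    lintegral_eq_lintegral_slope (hg.indicator measurableSet_T),
    ← lintegral_indicator measurableSet_Icc]
  congr 1
  refine lintegral_congr_ae ?_
  filter_upwards [volume.ae_ne (0 : ℝ)] with r hr
  by_cases hr01 : r ∈ Set.Icc 0 1
  · rw [Set.indicator_of_mem hr01, ← lintegral_indicator measurableSet_Icc, abs_of_nonneg hr01.1]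
    congr 1
    refine lintegral_congr fun s => ?_
    by_cases hs : s ∈ Set.Icc 0 1 <;> simp only [Set.indicator, slope_mem_T_iff hr, hr01, hs,
      and_self, and_false, if_true, if_false]
  · simp only [Set.indicator, slope_mem_T_iff hr, hr01, false_and, if_false, lintegral_zero,
      mul_zero]

end Triangle

section Beta

lemma lintegral_rpow_mul_one_sub_rpow {α β : ℝ} (hα : 0 < α) (hβ : 0 < β) :
    ∫⁻ r in Set.Ioo (0 : ℝ) 1, ENNReal.ofReal (r ^ (α - 1) * (1 - r) ^ (β - 1))
      = ENNReal.ofReal (ProbabilityTheory.beta α β) := by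
  have hpos := ProbabilityTheory.beta_pos hα hβ
  have hpdf := ProbabilityTheory.lintegral_betaPDF_eq_one hα hβ
  simp only [ProbabilityTheory.lintegral_betaPDF, mul_assoc,
    ENNReal.ofReal_mul (one_div_pos.2 hpos).le] at hpdf
  rw [lintegral_const_mul _ (by fun_prop)] at hpdf
  rw [← mul_one (ENNReal.ofReal _), ← hpdf, ← mul_assoc, ← ENNReal.ofReal_mul hpos.le,
    mul_one_div_cancel hpos.ne', ENNReal.ofReal_one, one_mul]

lemma beta_natCast_add_one (a b : ℕ) : ProbabilityTheory.beta (a + 1) (b + 1)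
    = a.factorial * b.factorial / (a + b + 1).factorial := by
  have hab : (a + 1 + (b + 1) : ℝ) = ((a + b + 1 : ℕ) : ℝ) + 1 := by push_cast; ring
  rw [ProbabilityTheory.beta, hab, Real.Gamma_nat_eq_factorial, Real.Gamma_nat_eq_factorial,
    Real.Gamma_nat_eq_factorial]

lemma lintegral_pow_mul_one_sub_pow (a b : ℕ) :
    ∫⁻ r in Set.Ioo (0 : ℝ) 1, ENNReal.ofReal (r ^ a * (1 - r) ^ b)
      = ENNReal.ofReal (a.factorial * b.factorial / (a + b + 1).factorial) := by
  rw [← beta_natCast_add_one, ← lintegral_rpow_mul_one_sub_rpow (by positivity) (by positivity)]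
  simp only [add_sub_cancel_right, Real.rpow_natCast]

end Beta

lemma μT_univ : μT Set.univ = 1 := by
  have hr : ∫⁻ r in Set.Ioo (0 : ℝ) 1, ENNReal.ofReal r = ENNReal.ofReal (1 / 2) := by
    simpa using lintegral_pow_mul_one_sub_pow 1 0
  rw [← lintegral_one, lintegral_μT measurable_const]
  simp only [lintegral_one, Measure.restrict_apply_univ, Real.volume_Ioo, sub_zero,
    ENNReal.ofReal_one, mul_one, hr]
  rw [← ENNReal.ofReal_ofNat 2, ← ENNReal.ofReal_mul zero_le_two]
  norm_num

lemma two_mul_volume_T : 2 * volume T = 1 := by simpa [μT] using μT_univ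

instance : IsProbabilityMeasure μT := ⟨μT_univ⟩

instance (n : ℕ) : IsProbabilityMeasure (P n) := by unfold P; infer_instance

lemma ae_mem_T : ∀ᵐ p ∂μT, p ∈ T :=
  Measure.smul_absolutelyContinuous.ae_le (ae_restrict_mem measurableSet_T)

lemma ae_P_forall {p : ℝ × ℝ → Prop} (hp : ∀ᵐ x ∂μT, p x) (n : ℕ) :
    ∀ᵐ ω ∂P n, ∀ i, p (ω i) :=
  ae_all_iff.2 fun i => (Measure.tendsto_eval_ae_ae (i := i)).eventually hp

lemma ae_range_subset_T (n : ℕ) : ∀ᵐ ω ∂P n, Set.range ω ⊆ T := by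
  simpa only [Set.range_subset_iff] using ae_P_forall ae_mem_T n

/-- Minus the slope of the line through `p` and the corner `(1, 0)` of `T`; among the sample
points, the vertex of the chain next to `(1, 0)` is the one that minimizes it. -/
def cornerSlope (p : ℝ × ℝ) : ℝ := p.2 / (1 - p.1)

lemma measurable_cornerSlope : Measurable cornerSlope :=
  measurable_snd.div (measurable_const.sub measurable_fst)

lemma μT_cornerSlope_eq (t : ℝ) : μT {p | cornerSlope p = t} = 0 := by
  have hmeas : MeasurableSet {p : ℝ × ℝ | cornerSlope p = t} :=
    measurableSet_eq_fun measurable_cornerSlope measurable_const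
  rw [← lintegral_indicator_one hmeas, lintegral_μT (measurable_one.indicator hmeas)]
  refine mul_eq_zero_of_right _ ?_
  rw [← lintegral_zero (μ := volume.restrict (Set.Ioo (0 : ℝ) 1))]
  refine setLIntegral_congr_fun measurableSet_Ioo fun r hr => mul_eq_zero_of_right _ ?_
  have hslope (s : ℝ) : cornerSlope (1 - r, r * s) = s := by
    rw [cornerSlope, sub_sub_cancel, mul_div_cancel_left₀ _ hr.1.ne']
  refine (lintegral_eq_zero_iff (by fun_prop)).2 (ae_restrict_of_ae ?_)
  filter_upwards [volume.ae_ne t] with s hs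
  simp only [Set.indicator, Set.mem_ofPred_eq, hslope, hs, if_false, Pi.zero_apply]

section TriangleMap

/-- The affine map sending the vertices `(0, 0)`, `(1, 0)`, `(0, 1)` of `T` to `a`, `b`, `c`. -/
def triangleMap (a b c : ℝ × ℝ) : ℝ × ℝ →ᵃ[ℝ] ℝ × ℝ :=
  (Matrix.toLin (Module.Basis.finTwoProd ℝ) (Module.Basis.finTwoProd ℝ)
    !![b.1 - a.1, c.1 - a.1; b.2 - a.2, c.2 - a.2]).toAffineMap + AffineMap.const ℝ (ℝ × ℝ) a

lemma triangleMap_apply (a b c p : ℝ × ℝ) :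
    triangleMap a b c p = a + p.1 • (b - a) + p.2 • (c - a) := by
  ext <;> simp only [triangleMap, AffineMap.coe_add, LinearMap.coe_toAffineMap, AffineMap.coe_const,
    Pi.add_apply, Matrix.toLin_finTwoProd_apply, Function.const_apply, Prod.fst_add, Prod.snd_add,
    Prod.smul_fst, Prod.smul_snd, Prod.fst_sub, Prod.snd_sub, smul_eq_mul] <;> ring

lemma det_triangleMap (a b c : ℝ × ℝ) : LinearMap.det (triangleMap a b c).linear
    = (b.1 - a.1) * (c.2 - a.2) - (c.1 - a.1) * (b.2 - a.2) := by
  simp [triangleMap, LinearMap.det_toLin, Matrix.det_fin_two]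

lemma triangleMap_image_T (a b c : ℝ × ℝ) : triangleMap a b c '' T = convexHull ℝ {a, b, c} := by
  rw [T, AffineMap.image_convexHull, Set.image_insert_eq, Set.image_pair]
  simp [triangleMap_apply]

lemma two_mul_volume_image_T (f : ℝ × ℝ →ᵃ[ℝ] ℝ × ℝ) :
    2 * volume (f '' T) = ENNReal.ofReal |LinearMap.det f.linear| := by
  rw [addHaar_image_affineMap, mul_left_comm, two_mul_volume_T, mul_one]

lemma two_mul_volume_convexHull_triple (a b c : ℝ × ℝ) :
    2 * volume (convexHull ℝ {a, b, c})
      = ENNReal.ofReal |(b.1 - a.1) * (c.2 - a.2) - (c.1 - a.1) * (b.2 - a.2)| := by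
  rw [← triangleMap_image_T, two_mul_volume_image_T, det_triangleMap]

lemma volume_segment (a b : ℝ × ℝ) : volume (segment ℝ a b) = 0 := by
  have h := two_mul_volume_convexHull_triple a a b
  rw [Set.insert_idem, convexHull_pair] at h
  simpa using h

lemma μT_image_T {f : ℝ × ℝ →ᵃ[ℝ] ℝ × ℝ} (hf : f '' T ⊆ T) :
    μT (f '' T) = ENNReal.ofReal |LinearMap.det f.linear| := by
  rw [μT, Measure.smul_apply, Measure.restrict_eq_self _ hf, smul_eq_mul, two_mul_volume_image_T]

lemma setLIntegral_pi_image_T {f : ℝ × ℝ →ᵃ[ℝ] ℝ × ℝ} (hf : f '' T ⊆ T) {n : ℕ}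
    {g : (Fin n → ℝ × ℝ) → ENNReal} (hg : Measurable g) :
    ∫⁻ ω, g ω ∂(Measure.pi fun _ : Fin n => μT.restrict (f '' T))
      = ENNReal.ofReal |LinearMap.det f.linear| ^ n * ∫⁻ ω, g (f ∘ ω) ∂P n := by
  have hrestrict : μT.restrict (f '' T)
      = Real.toNNReal |LinearMap.det f.linear| • μT.map f := by
    rw [μT, Measure.restrict_smul, Measure.restrict_restrict_of_subset hf,
      restrict_image_affineMap, Measure.map_smul, smul_comm]
    rfl
  simp only [hrestrict]
  exact lintegral_pi_smul_map _ μT f.continuous_of_finiteDimensional.measurable hg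

end TriangleMap

section HullArea

/-- Twice the area of the convex hull of `R ∪ {b, c}`, so that `V n ω` is the hull area of the
sample with respect to the corners `(1, 0)` and `(0, 1)`. -/
def hullArea (b c : ℝ × ℝ) (R : Set (ℝ × ℝ)) : ENNReal :=
  2 * volume (convexHull ℝ (R ∪ {b, c}))

lemma measurableOnSamples_hullArea (b c : ℝ × ℝ) : MeasurableOnSamples (hullArea b c) := by
  intro n
  have hcons : Measurable fun ω : Fin n → ℝ × ℝ =>
      (Fin.cons b (Fin.cons c ω : Fin (n + 1) → ℝ × ℝ) : Fin (n + 1 + 1) → ℝ × ℝ) :=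
    ((measurable_fin_cons _).comp measurable_prodMk_left).comp
      ((measurable_fin_cons _).comp measurable_prodMk_left)
  have h := ((measurable_measure_convexHull_range volume).comp hcons).const_mul 2
  simpa only [Function.comp_def, Fin.range_cons, hullArea, Set.union_insert, Set.union_singleton]
    using h

lemma hullArea_image (f : ℝ × ℝ →ᵃ[ℝ] ℝ × ℝ) (b c : ℝ × ℝ) (R : Set (ℝ × ℝ)) :
    hullArea (f b) (f c) (f '' R) = ENNReal.ofReal |LinearMap.det f.linear| * hullArea b c R := by
  rw [hullArea, hullArea, ← Set.image_pair, ← Set.image_union, ← AffineMap.image_convexHull,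
    addHaar_image_affineMap, mul_left_comm]

lemma hullArea_empty (b c : ℝ × ℝ) : hullArea b c ∅ = 0 := by
  rw [hullArea, Set.empty_union, convexHull_pair, volume_segment, mul_zero]

end HullArea

section Subtriangles

lemma mem_convexHull_triple_iff (a b c p : ℝ × ℝ) : p ∈ convexHull ℝ {a, b, c} ↔
    ∃ x y : ℝ, 0 ≤ x ∧ 0 ≤ y ∧ x + y ≤ 1 ∧ a + x • (b - a) + y • (c - a) = p := by
  simp only [← triangleMap_image_T, Set.mem_image, mem_T, triangleMap_apply, Prod.exists, and_assoc]

lemma shear_image_T {s : ℝ} (hs0 : 0 ≤ s) (hs1 : s < 1) :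
    triangleMap (0, s) (1, 0) (0, 1) '' T = {p ∈ T | s * (1 - p.1) ≤ p.2} := by
  have hs : 0 < 1 - s := sub_pos.2 hs1
  rw [triangleMap_image_T]
  ext ⟨u, v⟩
  simp only [mem_convexHull_triple_iff, Set.mem_ofPred_eq, mem_T, Prod.ext_iff, Prod.fst_add,
    Prod.snd_add, Prod.smul_fst, Prod.smul_snd, Prod.fst_sub, Prod.snd_sub, smul_eq_mul]
  constructor
  · rintro ⟨x, y, hx, hy, hxy, rfl, rfl⟩
    refine ⟨⟨?_, ?_, ?_⟩, ?_⟩ <;> nlinarith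
  · rintro ⟨⟨hu, -, huv⟩, hsuv⟩
    refine ⟨u, (v - s * (1 - u)) / (1 - s), hu, div_nonneg (sub_nonneg.2 hsuv) hs.le, ?_, ?_, ?_⟩
    · rw [← le_sub_iff_add_le', div_le_iff₀ hs]; linarith
    · ring
    · field_simp; ring

lemma scaling_image_T {z : ℝ} (hz0 : 0 < z) (hz1 : z ≤ 1) :
    triangleMap (0, 0) (z, 0) (0, 1) '' T = {p ∈ T | p.1 + z * p.2 ≤ z} := by
  rw [triangleMap_image_T]
  ext ⟨u, v⟩
  simp only [mem_convexHull_triple_iff, Set.mem_ofPred_eq, mem_T, Prod.ext_iff, Prod.fst_add,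
    Prod.snd_add, Prod.smul_fst, Prod.smul_snd, Prod.fst_sub, Prod.snd_sub, smul_eq_mul]
  constructor
  · rintro ⟨x, y, hx, hy, hxy, rfl, rfl⟩
    refine ⟨⟨?_, ?_, ?_⟩, ?_⟩ <;> nlinarith
  · rintro ⟨⟨hu, hv, -⟩, hzuv⟩
    refine ⟨u / z, v, div_nonneg hu hz0.le, hv, ?_, ?_, ?_⟩
    · rw [← le_sub_iff_add_le, div_le_iff₀ hz0]; linarith
    · field_simp; ring
    · ring

lemma mem_upperTriangle {z : ℝ} (hz1 : z < 1) {p : ℝ × ℝ} (hp : p ∈ T) (hzp : z ≤ p.1 + z * p.2) :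
    p ∈ convexHull ℝ {(z, 0), (1, 0), (0, 1)} := by
  have hz : 0 < 1 - z := sub_pos.2 hz1
  obtain ⟨-, hv, huv⟩ := (mem_T p).1 hp
  refine (mem_convexHull_triple_iff _ _ _ _).2
    ⟨(p.1 + z * p.2 - z) / (1 - z), p.2, div_nonneg (sub_nonneg.2 hzp) hz.le, hv, ?_, ?_⟩
  · rw [← le_sub_iff_add_le, div_le_iff₀ hz]; linarith
  · ext
    · simp only [Prod.mk_sub_mk, sub_self, Prod.smul_mk, smul_eq_mul, mul_zero, Prod.mk_add_mk,
        zero_sub]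
      field_simp
      ring
    · simp

lemma mem_segment_of_add_mul_eq {z : ℝ} {p : ℝ × ℝ} (hp : p ∈ T) (hzp : p.1 + z * p.2 = z) :
    p ∈ segment ℝ (z, 0) (0, 1) := by
  obtain ⟨hu, hv, huv⟩ := (mem_T p).1 hp
  refine ⟨1 - p.2, p.2, by linarith, hv, sub_add_cancel _ _, ?_⟩
  ext
  · simp only [Prod.smul_mk, smul_eq_mul, mul_zero, Prod.mk_add_mk, add_zero]
    linarith
  · simp

/-- The affine functional `p ↦ p.1 + z * p.2`, whose level set `z` is the line through `(z, 0)`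
and `(0, 1)`. -/
def separator (z : ℝ) : ℝ × ℝ →ᵃ[ℝ] ℝ :=
  (LinearMap.fst ℝ ℝ ℝ + z • LinearMap.snd ℝ ℝ ℝ).toAffineMap

lemma separator_apply (z : ℝ) (p : ℝ × ℝ) : separator z p = p.1 + z * p.2 := rfl

variable {z : ℝ} {R : Set (ℝ × ℝ)}

lemma upperTriangle_subset (hz0 : 0 < z) (hz1 : z < 1) :
    convexHull ℝ {(z, 0), (1, 0), (0, 1)} ⊆ {p ∈ T | z ≤ p.1 + z * p.2} := by
  refine convexHull_min ?_ (convex_T.inter ((convex_Ici z).affine_preimage (separator z)))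
  rintro p (rfl | rfl | rfl) <;> norm_num [mem_T, separator_apply, hz0.le, hz1.le]

lemma lowerHull_subset (hz0 : 0 < z) (hz1 : z < 1) (hR : R ⊆ {p ∈ T | p.1 + z * p.2 ≤ z}) :
    convexHull ℝ (R ∪ {(z, 0), (0, 1)}) ⊆ {p ∈ T | p.1 + z * p.2 ≤ z} := by
  refine convexHull_min (Set.union_subset hR ?_)
    (convex_T.inter ((convex_Iic z).affine_preimage (separator z)))
  rintro p (rfl | rfl) <;> norm_num [mem_T, separator_apply, hz0.le, hz1.le]

lemma convexHull_insert_eq_union (hz0 : 0 < z) (hz1 : z < 1) (hR : R ⊆ T) :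
    convexHull ℝ (insert (z, 0) R ∪ {(1, 0), (0, 1)})
      = convexHull ℝ (R ∩ {p ∈ T | p.1 + z * p.2 ≤ z} ∪ {(z, 0), (0, 1)})
        ∪ convexHull ℝ {(z, 0), (1, 0), (0, 1)} := by
  set L := convexHull ℝ (R ∩ {p ∈ T | p.1 + z * p.2 ≤ z} ∪ {(z, 0), (0, 1)})
  set U := convexHull ℝ {((z : ℝ), (0 : ℝ)), (1, 0), (0, 1)}
  have hL : L ⊆ {p ∈ T | p.1 + z * p.2 ≤ z} := lowerHull_subset hz0 hz1 Set.inter_subset_right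
  have hU : U ⊆ {p ∈ T | z ≤ p.1 + z * p.2} := upperTriangle_subset hz0 hz1
  have hlevel : ∀ p ∈ T, separator z p = z → p ∈ L ∩ U := fun p hp hpz =>
    ⟨segment_subset_convexHull (by simp) (by simp) (mem_segment_of_add_mul_eq hp hpz),
      mem_upperTriangle hz1 hp hpz.ge⟩
  have hconvex : Convex ℝ (L ∪ U) := convex_union_of_separating_level (convex_convexHull ℝ _)
    (convex_convexHull ℝ _) convex_T (separator z) z (fun p hp => (hL hp).1)
    (fun p hp => (hU hp).1) (fun p hp => (hL hp).2) (fun p hp => (hU hp).2) hlevel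
  refine (convexHull_min ?_ hconvex).antisymm (Set.union_subset ?_ ?_)
  · have hcorners : {(z, 0), (1, 0), (0, 1)} ⊆ U := subset_convexHull ℝ _
    have hRLU : R ⊆ L ∪ U := fun p hp => by
      rcases le_total (p.1 + z * p.2) z with hpz | hpz
      · exact .inl (subset_convexHull ℝ _ (.inl ⟨hp, hR hp, hpz⟩))
      · exact .inr (mem_upperTriangle hz1 (hR hp) hpz)
    rintro p ((rfl | hp) | rfl | rfl)
    exacts [.inr (hcorners (by simp)), hRLU hp, .inr (hcorners (by simp)),
      .inr (hcorners (by simp))]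
  · refine convexHull_mono ?_
    rintro p (⟨hp, -⟩ | rfl | rfl) <;> simp [*]
  · refine convexHull_mono ?_
    rintro p (rfl | rfl | rfl) <;> simp

lemma hullArea_insert (hz0 : 0 < z) (hz1 : z < 1) (hR : R ⊆ T) :
    hullArea (1, 0) (0, 1) (insert (z, 0) R) = ENNReal.ofReal (1 - z)
      + hullArea (z, 0) (0, 1) (R ∩ triangleMap (0, 0) (z, 0) (0, 1) '' T) := by
  have hdisj : AEDisjoint volume
      (convexHull ℝ (R ∩ {p ∈ T | p.1 + z * p.2 ≤ z} ∪ {(z, 0), (0, 1)}))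
      (convexHull ℝ {(z, 0), (1, 0), (0, 1)}) := by
    refine measure_mono_null (fun p hp => ?_) (volume_segment (z, 0) (0, 1))
    have hlower := lowerHull_subset hz0 hz1 Set.inter_subset_right hp.1
    exact mem_segment_of_add_mul_eq hlower.1
      (hlower.2.antisymm (upperTriangle_subset hz0 hz1 hp.2).2)
  rw [hullArea, convexHull_insert_eq_union hz0 hz1 hR,
    measure_union₀ ((convex_convexHull ℝ _).nullMeasurableSet volume) hdisj, mul_add, add_comm,
    two_mul_volume_convexHull_triple, scaling_image_T hz0 hz1.le, hullArea]
  simp [abs_of_pos (sub_pos.2 hz1)]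

end Subtriangles

section ConditionalMoments

open Finset.HasAntidiagonal (antidiagonal)

/-- The `k`-th moment of the normalized area `V n`, as an extended nonnegative real. -/
def areaMoment (k n : ℕ) : ENNReal := ∫⁻ ω, hullArea (1, 0) (0, 1) (Set.range ω) ^ k ∂P n

lemma hullArea_le_one {R : Set (ℝ × ℝ)} (hR : R ⊆ T) : hullArea (1, 0) (0, 1) R ≤ 1 := by
  rw [hullArea, ← two_mul_volume_T]
  gcongr
  refine convexHull_min (Set.union_subset hR ?_) convex_T
  rintro p (rfl | rfl) <;> simp [mem_T]

lemma areaMoment_le_one (k n : ℕ) : areaMoment k n ≤ 1 := by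
  rw [← measure_univ (μ := P n), ← lintegral_one]
  refine lintegral_mono_ae ?_
  filter_upwards [ae_range_subset_T n] with ω hω
  exact pow_le_one₀ zero_le (hullArea_le_one hω)

lemma measurableOnSamples_add_hullArea_pow (a : ENNReal) (b c : ℝ × ℝ) (k : ℕ) :
    MeasurableOnSamples fun R => (a + hullArea b c R) ^ k := fun n =>
  ((measurableOnSamples_hullArea b c n).const_add a).pow_const k

lemma measurableOnSamples_hullArea_pow (b c : ℝ × ℝ) (k : ℕ) :
    MeasurableOnSamples fun R => hullArea b c R ^ k := fun n =>
  (measurableOnSamples_hullArea b c n).pow_const k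

lemma lintegral_add_mul_hullArea_pow (a b : ENNReal) (k n : ℕ) :
    ∫⁻ ω, (a + b * hullArea (1, 0) (0, 1) (Set.range ω)) ^ k ∂P n
      = ∑ ii ∈ antidiagonal k, (k.choose ii.1 : ENNReal) *
          (b ^ ii.1 * a ^ ii.2 * areaMoment ii.1 n) := by
  have hmeas (i : ℕ) := measurableOnSamples_hullArea_pow (1, 0) (0, 1) i n
  simp only [add_comm a, (Commute.all _ a).add_pow', mul_pow, nsmul_eq_mul]
  rw [lintegral_finsetSum _ fun ii _ => by
    exact (((hmeas ii.1).const_mul _).mul_const _).const_mul _]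
  refine Finset.sum_congr rfl fun ii _ => ?_
  rw [lintegral_const_mul _ (((hmeas ii.1).const_mul _).mul_const _),
    lintegral_mul_const _ ((hmeas ii.1).const_mul _), lintegral_const_mul _ (hmeas ii.1),
    areaMoment, mul_right_comm]

lemma scaling_image_T_subset {z : ℝ} (hz : z ∈ Set.Ioo (0 : ℝ) 1) :
    triangleMap (0, 0) (z, 0) (0, 1) '' T ⊆ T := by
  rw [scaling_image_T hz.1 hz.2.le]
  exact Set.sep_subset _ _

lemma abs_det_scaling {z : ℝ} (hz : 0 < z) :
    |LinearMap.det (triangleMap (0, 0) (z, 0) (0, 1)).linear| = z := by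
  simp [det_triangleMap, abs_of_pos hz]

lemma measurableSet_scaling_image_T {z : ℝ} (hz : z ∈ Set.Ioo (0 : ℝ) 1) :
    MeasurableSet (triangleMap (0, 0) (z, 0) (0, 1) '' T) := by
  rw [scaling_image_T hz.1 hz.2.le]
  have hle : Measurable fun p : ℝ × ℝ => p.1 + z * p.2 := by fun_prop
  exact measurableSet_T.inter (measurableSet_le hle measurable_const)

lemma μT_compl_scaling_image_T {z : ℝ} (hz : z ∈ Set.Ioo (0 : ℝ) 1) :
    μT (triangleMap (0, 0) (z, 0) (0, 1) '' T)ᶜ = ENNReal.ofReal (1 - z) := by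
  rw [prob_compl_eq_one_sub (measurableSet_scaling_image_T hz),
    μT_image_T (scaling_image_T_subset hz), abs_det_scaling hz.1, ← ENNReal.ofReal_one,
    ← ENNReal.ofReal_sub _ hz.1.le]

lemma hullArea_scaling {z : ℝ} (hz : 0 < z) (R : Set (ℝ × ℝ)) :
    hullArea (z, 0) (0, 1) (triangleMap (0, 0) (z, 0) (0, 1) '' R)
      = ENNReal.ofReal z * hullArea (1, 0) (0, 1) R := by
  have h := hullArea_image (triangleMap (0, 0) (z, 0) (0, 1)) (1, 0) (0, 1) R
  rw [abs_det_scaling hz] at h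
  simpa [triangleMap_apply] using h

lemma lintegral_hullArea_insert_pow {z : ℝ} (hz : z ∈ Set.Ioo (0 : ℝ) 1) (k m : ℕ) :
    ∫⁻ ω, hullArea (1, 0) (0, 1) (insert (z, 0) (Set.range ω)) ^ k ∂P m
      = ∑ jl ∈ antidiagonal m, ∑ ii ∈ antidiagonal k, ((m.choose jl.1 * k.choose ii.1 : ℕ) *
          (ENNReal.ofReal (1 - z) ^ (jl.2 + ii.2) * ENNReal.ofReal z ^ (jl.1 + ii.1)) *
          areaMoment ii.1 jl.1) := by
  have hinsert : ∀ᵐ ω ∂P m, hullArea (1, 0) (0, 1) (insert (z, 0) (Set.range ω)) ^ k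
      = (ENNReal.ofReal (1 - z) + hullArea (z, 0) (0, 1)
          (Set.range ω ∩ triangleMap (0, 0) (z, 0) (0, 1) '' T)) ^ k := by
    filter_upwards [ae_range_subset_T m] with ω hω
    rw [hullArea_insert hz.1 hz.2 hω]
  have hmeas := measurableOnSamples_add_hullArea_pow (ENNReal.ofReal (1 - z)) (z, 0) (0, 1) k
  rw [lintegral_congr_ae hinsert, P,
    lintegral_pi_range_inter hmeas (measurableSet_scaling_image_T hz)]
  refine Finset.sum_congr rfl fun jl _ => ?_
  rw [setLIntegral_pi_image_T (scaling_image_T_subset hz) (hmeas jl.1),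
    μT_compl_scaling_image_T hz, abs_det_scaling hz.1]
  simp only [Set.range_comp, hullArea_scaling hz.1, lintegral_add_mul_hullArea_pow,
    Finset.mul_sum]
  refine Finset.sum_congr rfl fun ii _ => ?_
  push_cast
  ring

variable {r s : ℝ}

lemma cornerSlope_le_ae_eq (hr : 0 < r) (hs : s ∈ Set.Ioo (0 : ℝ) 1) (m : ℕ) :
    {ω : Fin m → ℝ × ℝ | ∀ i, cornerSlope (1 - r, r * s) ≤ cornerSlope (ω i)}
      =ᵐ[P m] Set.univ.pi fun _ => triangleMap (0, s) (1, 0) (0, 1) '' T := by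
  have hcorner : ∀ᵐ p ∂μT, p ≠ (1, 0) :=
    Measure.smul_absolutelyContinuous.ae_le (ae_restrict_of_ae (volume.ae_ne _))
  have hpoint : ∀ᵐ p ∂μT, cornerSlope (1 - r, r * s) ≤ cornerSlope p
      ↔ p ∈ triangleMap (0, s) (1, 0) (0, 1) '' T := by
    filter_upwards [ae_mem_T, hcorner] with p hpT hp
    obtain ⟨-, h2, h12⟩ := (mem_T p).1 hpT
    have hlt : p.1 < 1 := by
      refine lt_of_le_of_ne (by linarith) fun h => hp (Prod.ext h ?_)
      simp only
      linarith
    rw [shear_image_T hs.1.le hs.2, cornerSlope, cornerSlope, sub_sub_cancel,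
      mul_div_cancel_left₀ _ hr.ne', le_div_iff₀ (sub_pos.2 hlt)]
    simp [hpT]
  have hall : ∀ᵐ ω ∂P m, ∀ i, cornerSlope (1 - r, r * s) ≤ cornerSlope (ω i)
      ↔ ω i ∈ triangleMap (0, s) (1, 0) (0, 1) '' T :=
    ae_P_forall hpoint m
  refine Filter.eventuallyEq_set.2 ?_
  filter_upwards [hall] with ω hω
  simp only [Set.mem_univ_pi, hω]

lemma setLIntegral_cornerSlope_le (hr : 0 < r) (hs : s ∈ Set.Ioo (0 : ℝ) 1) (k m : ℕ) :
    ∫⁻ ω in {ω | ∀ i, cornerSlope (1 - r, r * s) ≤ cornerSlope (ω i)},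
        hullArea (1, 0) (0, 1) (insert (1 - r, r * s) (Set.range ω)) ^ k ∂P m
      = ENNReal.ofReal (1 - s) ^ (m + k) *
          ∫⁻ ω, hullArea (1, 0) (0, 1) (insert (1 - r, 0) (Set.range ω)) ^ k ∂P m := by
  set f := triangleMap (0, s) (1, 0) (0, 1) with hf
  have hfT : f '' T ⊆ T := by
    rw [hf, shear_image_T hs.1.le hs.2]
    exact Set.sep_subset _ _
  have hdet : |LinearMap.det f.linear| = 1 - s := by
    simp [hf, det_triangleMap, abs_of_pos (sub_pos.2 hs.2)]
  have himage (ω : Fin m → ℝ × ℝ) :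
      hullArea (1, 0) (0, 1) (insert (1 - r, r * s) (Set.range (f ∘ ω)))
        = ENNReal.ofReal (1 - s) *
            hullArea (1, 0) (0, 1) (insert (1 - r, 0) (Set.range ω)) := by
    rw [← hdet, ← hullArea_image, Set.image_insert_eq, Set.range_comp]
    simp only [hf, triangleMap_apply, Prod.mk_sub_mk, Prod.smul_mk, smul_eq_mul, Prod.mk_add_mk]
    ring_nf
  have hmeas (p : ℝ × ℝ) := (measurableOnSamples_hullArea_pow (1, 0) (0, 1) k).insert p m
  rw [setLIntegral_congr (cornerSlope_le_ae_eq hr hs m), P, Measure.restrict_pi_pi,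
    setLIntegral_pi_image_T hfT (hmeas _), hdet]
  simp only [himage, mul_pow]
  rw [lintegral_const_mul _ (hmeas _), pow_add, mul_assoc]
  rfl

end ConditionalMoments

section MomentRecursion

open Finset.HasAntidiagonal (antidiagonal mem_antidiagonal)

lemma lintegral_one_sub_pow (m : ℕ) :
    ∫⁻ s in Set.Ioo (0 : ℝ) 1, ENNReal.ofReal (1 - s) ^ m = ENNReal.ofReal (1 / (m + 1)) := by
  have h := lintegral_pow_mul_one_sub_pow 0 m
  rw [zero_add, Nat.factorial_zero, Nat.cast_one, one_mul, Nat.factorial_succ, Nat.cast_mul,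
    div_mul_cancel_right₀ (by positivity), ← one_div, Nat.cast_succ] at h
  rw [← h]
  refine setLIntegral_congr_fun measurableSet_Ioo fun s hs => ?_
  rw [pow_zero, one_mul, ENNReal.ofReal_pow (sub_pos.2 hs.2).le]

lemma lintegral_ofReal_pow_mul_one_sub_pow (a b : ℕ) :
    ∫⁻ r in Set.Ioo (0 : ℝ) 1, ENNReal.ofReal r ^ a * ENNReal.ofReal (1 - r) ^ b
      = ENNReal.ofReal (a.factorial * b.factorial / (a + b + 1).factorial) := by
  rw [← lintegral_pow_mul_one_sub_pow]
  refine setLIntegral_congr_fun measurableSet_Ioo fun r hr => ?_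
  rw [ENNReal.ofReal_mul (pow_nonneg hr.1.le _), ENNReal.ofReal_pow hr.1.le,
    ENNReal.ofReal_pow (sub_pos.2 hr.2).le]

lemma areaMoment_succ_eq_lintegral (k m : ℕ) :
    areaMoment k (m + 1) = (m + 1) * (2 * (ENNReal.ofReal (1 / ((m + k : ℕ) + 1)) *
      ∫⁻ r in Set.Ioo (0 : ℝ) 1, ENNReal.ofReal r *
        ∫⁻ ω, hullArea (1, 0) (0, 1) (insert (1 - r, 0) (Set.range ω)) ^ k ∂P m)) := by
  have hmeas := measurableOnSamples_hullArea_pow (1, 0) (0, 1) k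
  rw [areaMoment, P, lintegral_pi_range_succ_eq_argmin hmeas measurable_cornerSlope
      μT_cornerSlope_eq, lintegral_μT (measurable_setLIntegral_forall_le measurable_cornerSlope
      (hmeas.measurable_insert m))]
  rw [← lintegral_const_mul' _ _ ENNReal.ofReal_ne_top]
  congr 2
  refine setLIntegral_congr_fun measurableSet_Ioo fun r hr => ?_
  rw [mul_left_comm]
  congr 1
  rw [← lintegral_one_sub_pow, ← lintegral_mul_const _ (by fun_prop)]
  exact setLIntegral_congr_fun measurableSet_Ioo fun s hs => setLIntegral_cornerSlope_le hr.1 hs k m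

lemma areaMoment_succ (k m : ℕ) :
    areaMoment k (m + 1) = (m + 1) * (2 * (ENNReal.ofReal (1 / ((m + k : ℕ) + 1)) *
      ∑ jl ∈ antidiagonal m, ∑ ii ∈ antidiagonal k, (m.choose jl.1 * k.choose ii.1 : ℕ) *
        ENNReal.ofReal ((jl.2 + ii.2 + 1).factorial * (jl.1 + ii.1).factorial /
          (m + k + 2).factorial) * areaMoment ii.1 jl.1)) := by
  rw [areaMoment_succ_eq_lintegral]
  congr 3
  have hinner (r : ℝ) (hr : r ∈ Set.Ioo (0 : ℝ) 1) : ENNReal.ofReal r *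
      ∫⁻ ω, hullArea (1, 0) (0, 1) (insert (1 - r, 0) (Set.range ω)) ^ k ∂P m
        = ∑ jl ∈ antidiagonal m, ∑ ii ∈ antidiagonal k, (m.choose jl.1 * k.choose ii.1 : ℕ) *
            (ENNReal.ofReal r ^ (jl.2 + ii.2 + 1) * ENNReal.ofReal (1 - r) ^ (jl.1 + ii.1)) *
            areaMoment ii.1 jl.1 := by
    rw [lintegral_hullArea_insert_pow ⟨sub_pos.2 hr.2, sub_lt_self 1 hr.1⟩, sub_sub_cancel]
    simp only [Finset.mul_sum]
    exact Finset.sum_congr rfl fun jl _ => Finset.sum_congr rfl fun ii _ => by ring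
  rw [setLIntegral_congr_fun measurableSet_Ioo hinner,
    lintegral_finsetSum _ fun jl _ => by fun_prop]
  refine Finset.sum_congr rfl fun jl hjl => ?_
  rw [lintegral_finsetSum _ fun ii _ => by fun_prop]
  refine Finset.sum_congr rfl fun ii hii => ?_
  have hexponent : jl.2 + ii.2 + 1 + (jl.1 + ii.1) + 1 = m + k + 2 := by
    linarith [mem_antidiagonal.1 hjl, mem_antidiagonal.1 hii]
  rw [lintegral_mul_const _ (by fun_prop), lintegral_const_mul _ (by fun_prop),
    lintegral_ofReal_pow_mul_one_sub_pow, hexponent]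

lemma integral_V_pow (n k : ℕ) : ∫ ω, V n ω ^ k ∂P n = (areaMoment k n).toReal := by
  have hV (ω : Fin n → ℝ × ℝ) :
      V n ω ^ k = (hullArea (1, 0) (0, 1) (Set.range ω) ^ k).toReal := by
    rw [V, Tchain, hullArea, ENNReal.toReal_pow, ENNReal.toReal_mul, ENNReal.toReal_ofNat]
  simp only [hV, areaMoment]
  refine integral_toReal
    (measurableOnSamples_hullArea_pow (1, 0) (0, 1) k n).aemeasurable ?_
  filter_upwards [ae_range_subset_T n] with ω hω
  exact ENNReal.pow_lt_top ((hullArea_le_one hω).trans_lt ENNReal.one_lt_top)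

lemma q_eq (n k : ℕ) : q n k = (n + k).choose k * (areaMoment k n).toReal := by
  rw [q, integral_V_pow]

lemma areaMoment_ne_top (k n : ℕ) : areaMoment k n ≠ ⊤ :=
  ((areaMoment_le_one k n).trans_lt ENNReal.one_lt_top).ne

lemma toReal_areaMoment_succ (k m : ℕ) :
    (areaMoment k (m + 1)).toReal = (m + 1) * (2 * (1 / ((m + k : ℕ) + 1) *
      ∑ jl ∈ antidiagonal m, ∑ ii ∈ antidiagonal k, (m.choose jl.1 * k.choose ii.1 : ℕ) *
        ((jl.2 + ii.2 + 1).factorial * (jl.1 + ii.1).factorial / (m + k + 2).factorial) *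
          (areaMoment ii.1 jl.1).toReal)) := by
  have hterm (c : ℕ) (x : ℝ) (i j : ℕ) : (c * ENNReal.ofReal x * areaMoment i j) ≠ ⊤ :=
    ENNReal.mul_ne_top (ENNReal.mul_ne_top (ENNReal.natCast_ne_top c) ENNReal.ofReal_ne_top)
      (areaMoment_ne_top i j)
  rw [areaMoment_succ, ENNReal.toReal_mul, ENNReal.toReal_mul, ENNReal.toReal_mul,
    ENNReal.toReal_ofReal (by positivity), ENNReal.toReal_sum fun jl _ =>
      ENNReal.sum_ne_top.2 fun ii _ => hterm _ _ _ _]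
  congr 3
  refine Finset.sum_congr rfl fun jl _ => ?_
  rw [ENNReal.toReal_sum fun ii _ => hterm _ _ _ _]
  refine Finset.sum_congr rfl fun ii _ => ?_
  rw [ENNReal.toReal_mul, ENNReal.toReal_mul, ENNReal.toReal_natCast,
    ENNReal.toReal_ofReal (by positivity)]

lemma q_succ (m k : ℕ) : ((m + k + 1) * (m + k + 2)) * q (m + 1) k
    = 2 * ∑ jl ∈ antidiagonal m, ∑ ii ∈ antidiagonal k,
        (jl.2 + 1) * (jl.2 + 1 + ii.2).choose ii.2 * q jl.1 ii.1 := by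
  simp only [q_eq, toReal_areaMoment_succ, Finset.mul_sum]
  refine Finset.sum_congr rfl fun jl hjl => Finset.sum_congr rfl fun ii hii => ?_
  rw [← mem_antidiagonal.1 hjl, ← mem_antidiagonal.1 hii]
  obtain ⟨j, l⟩ := jl
  obtain ⟨i, i'⟩ := ii
  have hchoose : ((j + l + 1 + (i + i')).choose (i + i') : ℝ)
      = (j + l + (i + i') + 1).factorial / ((j + l + 1).factorial * (i + i').factorial) := by
    rw [← Nat.choose_symm_add, Nat.cast_add_choose, add_right_comm]
  have hchoose' : ((l + 1 + i').choose i' : ℝ)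
      = (l + i' + 1).factorial / ((l + 1).factorial * i'.factorial) := by
    rw [← Nat.choose_symm_add, Nat.cast_add_choose, add_right_comm]
  rw [hchoose, hchoose', Nat.cast_mul, Nat.cast_add_choose, Nat.cast_add_choose,
    ← Nat.choose_symm_add (a := j), Nat.cast_add_choose, Nat.factorial_succ (_ + _ + 1),
    Nat.factorial_succ (j + l), Nat.factorial_succ l]
  push_cast
  field_simp
  ring

end MomentRecursion

section SecondDifference

open Finset.HasAntidiagonal (antidiagonal)

/-- The partial sums `∑ j ≤ n, f j` of a real sequence. Iterating this operator turns the
convolutions in the moment recursion into sequences with explicit differences. -/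
def partialSum (f : ℕ → ℝ) (n : ℕ) : ℝ := ∑ j ∈ Finset.range (n + 1), f j

lemma partialSum_zero (f : ℕ → ℝ) : partialSum f 0 = f 0 := Finset.sum_range_one f

lemma partialSum_succ (f : ℕ → ℝ) (n : ℕ) :
    partialSum f (n + 1) = partialSum f n + f (n + 1) :=
  Finset.sum_range_succ f (n + 1)

lemma iterate_partialSum_zero (p : ℕ) (f : ℕ → ℝ) : partialSum^[p] f 0 = f 0 := by
  induction p with
  | zero => rfl
  | succ p ih => rw [Function.iterate_succ_apply', partialSum_zero, ih]

lemma iterate_partialSum_succ (p : ℕ) (f : ℕ → ℝ) (n : ℕ) :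
    partialSum^[p + 1] f (n + 1) = partialSum^[p + 1] f n + partialSum^[p] f (n + 1) := by
  rw [Function.iterate_succ_apply', partialSum_succ]

lemma sum_antidiagonal_choose_mul (p : ℕ) (f : ℕ → ℝ) (m : ℕ) :
    ∑ jl ∈ antidiagonal m, (jl.2 + p).choose p * f jl.1 = partialSum^[p + 1] f m := by
  induction p generalizing m with
  | zero =>
    simp only [Nat.choose_zero_right, Nat.cast_one, one_mul]
    exact Finset.Nat.sum_antidiagonal_eq_sum_range_succ_mk (fun jl : ℕ × ℕ => f jl.1) m
  | succ p ihp =>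
    induction m with
    | zero => simp [iterate_partialSum_zero]
    | succ m ihm =>
      have hpascal (l : ℕ) : ((l + 1 + (p + 1)).choose (p + 1) : ℝ)
          = (l + (p + 1)).choose (p + 1) + (l + 1 + p).choose p := by
        rw [← Nat.cast_add, add_comm (Nat.choose _ _), ← add_assoc (l + 1), Nat.choose_succ_succ,
          add_right_comm l 1 p, add_assoc l p 1]
      rw [iterate_partialSum_succ, ← ihm, ← ihp, Finset.Nat.sum_antidiagonal_succ',
        Finset.Nat.sum_antidiagonal_succ']
      simp only [zero_add, Nat.choose_self, hpascal, add_mul, Finset.sum_add_distrib]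
      ring

lemma q_succ_eq_iterate_partialSum (m k : ℕ) : (m + k + 1) * (m + k + 2) * q (m + 1) k
    = 2 * ∑ ii ∈ antidiagonal k, (ii.2 + 1) * partialSum^[ii.2 + 2] (q · ii.1) m := by
  rw [q_succ, Finset.sum_comm]
  simp only [← sum_antidiagonal_choose_mul, Finset.mul_sum]
  refine Finset.sum_congr rfl fun ii _ => Finset.sum_congr rfl fun jl _ => ?_
  have habsorb : ((jl.2 + (ii.2 + 1)).choose (ii.2 + 1) : ℝ) * (ii.2 + 1)
      = (jl.2 + 1 + ii.2).choose ii.2 * (jl.2 + 1) := by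
    have h := Nat.choose_succ_right_eq (jl.2 + 1 + ii.2) ii.2
    rw [add_tsub_cancel_right, add_right_comm, add_assoc] at h
    rw [add_right_comm jl.2 1, add_assoc jl.2 ii.2]
    exact_mod_cast h
  linear_combination (-2 * q jl.1 ii.1) * habsorb

lemma areaMoment_zero_right {k : ℕ} (hk : k ≠ 0) : areaMoment k 0 = 0 := by
  simp [areaMoment, hullArea_empty, hk]

theorem q_second_difference (n k : ℕ) :
    (n + k + 2) * (n + k + 3) * q (n + 2) k - 2 * ((n + k + 1) * (n + k + 2) * q (n + 1) k)
        + (n + k) * (n + k + 1) * q n k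
      = 2 * ∑ ii ∈ antidiagonal k, (ii.2 + 1) * partialSum^[ii.2] (q · ii.1) (n + 1) := by
  have h1 := q_succ_eq_iterate_partialSum n k
  have h2 := q_succ_eq_iterate_partialSum (n + 1) k
  have hstart : (n + k) * (n + k + 1) * q n k = 2 * ∑ ii ∈ antidiagonal k, (ii.2 + 1) *
      (partialSum^[ii.2 + 2] (q · ii.1) n - partialSum^[ii.2 + 1] (q · ii.1) n) := by
    cases n with
    | zero =>
      have hq : (k : ℝ) * q 0 k = 0 := by
        rcases eq_or_ne k 0 with rfl | hk
        · simp
        · simp [q_eq, areaMoment_zero_right hk]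
      simp [iterate_partialSum_zero, hq, mul_right_comm _ _ (q 0 k)]
    | succ m =>
      have h0 := q_succ_eq_iterate_partialSum m k
      simp only [iterate_partialSum_succ _ _ m, add_sub_cancel_right]
      push_cast
      linear_combination h0
  have hsum : ∑ ii ∈ antidiagonal k, (ii.2 + 1) * partialSum^[ii.2 + 2] (q · ii.1) (n + 1)
      - 2 * ∑ ii ∈ antidiagonal k, (ii.2 + 1) * partialSum^[ii.2 + 2] (q · ii.1) n
      + ∑ ii ∈ antidiagonal k, (ii.2 + 1) * (partialSum^[ii.2 + 2] (q · ii.1) n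
        - partialSum^[ii.2 + 1] (q · ii.1) n)
      = ∑ ii ∈ antidiagonal k, (ii.2 + 1) * partialSum^[ii.2] (q · ii.1) (n + 1) := by
    rw [Finset.mul_sum, ← Finset.sum_sub_distrib, ← Finset.sum_add_distrib]
    refine Finset.sum_congr rfl fun ii _ => ?_
    rw [iterate_partialSum_succ, iterate_partialSum_succ]
    ring
  push_cast at h2
  linear_combination h2 - 2 * h1 + hstart + 2 * hsum

end SecondDifference

section ClosedForms

open Finset.HasAntidiagonal (antidiagonal)

lemma q_zero_right (n : ℕ) : q n 0 = 1 := by simp [q]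

lemma q_zero_left {k : ℕ} (hk : k ≠ 0) : q 0 k = 0 := by
  rw [q_eq, areaMoment_zero_right hk, ENNReal.toReal_zero, mul_zero]

lemma H_succ (n : ℕ) : H (n + 1) = H n + 1 / (n + 1) := Finset.sum_range_succ _ n

lemma H2_succ (n : ℕ) : H2 (n + 1) = H2 n + 1 / (n + 1) ^ 2 := Finset.sum_range_succ _ n

lemma partialSum_one (n : ℕ) : partialSum (fun _ => 1) n = n + 1 := by
  simp [partialSum]

lemma partialSum_partialSum_one (n : ℕ) :
    partialSum (partialSum fun _ => 1) n = (n + 1) * (n + 2) / 2 := by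
  induction n with
  | zero => norm_num [partialSum_zero]
  | succ n ih =>
    rw [partialSum_succ, ih, partialSum_one]
    push_cast
    ring

lemma sum_antidiagonal_one (g : ℕ × ℕ → ℝ) :
    ∑ ii ∈ antidiagonal 1, g ii = g (0, 1) + g (1, 0) := by
  simp [Finset.Nat.antidiagonal_succ]

lemma sum_antidiagonal_two (g : ℕ × ℕ → ℝ) :
    ∑ ii ∈ antidiagonal 2, g ii = g (0, 2) + g (1, 1) + g (2, 0) := by
  simp [Finset.Nat.antidiagonal_succ, add_assoc]

lemma q_one_recurrence (n : ℕ) : (n + 3) * (n + 4) * q (n + 2) 1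
    = 2 * ((n + 2) * (n + 3) + 1) * q (n + 1) 1 - (n + 1) * (n + 2) * q n 1 + 4 * (n + 2) := by
  have h := q_second_difference n 1
  simp only [sum_antidiagonal_one, q_zero_right, Function.iterate_one, Function.iterate_zero, id_eq,
    partialSum_one] at h
  push_cast at h
  linear_combination h

lemma q_two_recurrence (n : ℕ) : (n + 4) * (n + 5) * (2 * q (n + 2) 2)
    = 2 * ((n + 3) * (n + 4) + 1) * (2 * q (n + 1) 2) - (n + 2) * (n + 3) * (2 * q n 2)
      + 8 * partialSum (q · 1) (n + 1) + 6 * (n + 2) * (n + 3) := by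
  have h := q_second_difference n 2
  simp only [sum_antidiagonal_two, q_zero_right, Function.iterate_succ_apply,
    Function.iterate_zero_apply, partialSum_partialSum_one] at h
  push_cast at h
  linear_combination 2 * h

lemma q_one_one : q 1 1 = 2 / 3 := by
  have h := q_succ_eq_iterate_partialSum 0 1
  simp only [sum_antidiagonal_one, iterate_partialSum_zero, q_zero_right,
    q_zero_left one_ne_zero] at h
  push_cast at h
  linarith

lemma q_one_two : q 1 2 = 1 / 2 := by
  have h := q_succ_eq_iterate_partialSum 0 2
  simp only [sum_antidiagonal_two, iterate_partialSum_zero, q_zero_right,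
    q_zero_left one_ne_zero, q_zero_left two_ne_zero] at h
  push_cast at h
  linarith

theorem q_one_eq (n : ℕ) : q n 1 = (n + 1) - (2 / 3 * H (n + 1) + 1 / 3) := by
  induction n using Nat.twoStepInduction with
  | zero => norm_num [q_zero_left, H]
  | one => norm_num [q_one_one, H, Finset.sum_range_succ]
  | more n ih0 ih1 =>
    refine mul_left_cancel₀ (by positivity : ((n : ℝ) + 3) * (n + 4) ≠ 0) ?_
    rw [q_one_recurrence, ih0, ih1, H_succ (n + 2), H_succ (n + 1)]
    push_cast
    field_simp
    ring

lemma partialSum_q_one (n : ℕ) : partialSum (q · 1) n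
    = (n + 1) * (n + 2) / 2 + (n + 1) / 3 - 2 / 3 * (n + 2) * H (n + 1) := by
  induction n with
  | zero => norm_num [partialSum_zero, q_zero_left, H]
  | succ n ih =>
    rw [partialSum_succ, ih, q_one_eq, H_succ (n + 1)]
    push_cast
    field_simp
    ring

theorem two_mul_q_two_eq (n : ℕ) : 2 * q n 2
    = (n + 1) * (n + 2) + 10 / 27 * H (n + 2) + 4 / 9 * H2 (n + 2) - 28 / 27 + 4 / (9 * (n + 3))
      + (2 / 3 * H (n + 2) + 1 / 3) ^ 2 - (2 * n + 3) * (2 / 3 * H (n + 2) + 1 / 3) := by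
  induction n using Nat.twoStepInduction with
  | zero => norm_num [q_zero_left, H, H2, Finset.sum_range_succ]
  | one => norm_num [q_one_two, H, H2, Finset.sum_range_succ]
  | more n ih0 ih1 =>
    refine mul_left_cancel₀ (by positivity : ((n : ℝ) + 4) * (n + 5) ≠ 0) ?_
    rw [q_two_recurrence, ih0, ih1, partialSum_q_one, H_succ (n + 3), H2_succ (n + 3),
      H_succ (n + 2), H2_succ (n + 2)]
    push_cast
    field_simp
    ring

end ClosedForms

section Asymptotics

open Filter Asymptotics

lemma isBigO_H_sub_log :
    (fun n : ℕ => H (n + 2) - Real.log n) =O[atTop] fun _ => (1 : ℝ) := by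
  have hH (n : ℕ) : H n = harmonic n := by simp [H, harmonic]
  have hshift : Tendsto (fun n : ℕ => 1 / ((n : ℝ) + 1) + 1 / (((n + 1 : ℕ) : ℝ) + 1)) atTop
      (nhds (0 + 0)) :=
    tendsto_one_div_add_atTop_nhds_zero_nat.add
      (tendsto_one_div_add_atTop_nhds_zero_nat.comp (tendsto_add_atTop_nat 1))
  refine ((Real.tendsto_harmonic_sub_log.add hshift).isBigO_one ℝ).congr_left fun n => ?_
  rw [H_succ, H_succ, hH]
  ring

lemma isBigO_H2 : H2 =O[atTop] fun _ => (1 : ℝ) := by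
  have hsum : Summable fun i : ℕ => 1 / ((i : ℝ) + 1) ^ 2 := by
    simpa using (summable_nat_add_iff 1).2 (Real.summable_one_div_nat_pow.2 one_lt_two)
  exact hsum.hasSum.tendsto_sum_nat.isBigO_one ℝ

lemma isBigO_log_natCast : (fun n : ℕ => Real.log n) =O[atTop] fun n => (n : ℝ) :=
  Real.isLittleO_log_id_atTop.isBigO.comp_tendsto tendsto_natCast_atTop_atTop

lemma isBigO_one_div_natCast_add (m : ℕ) :
    (fun n : ℕ => 1 / ((n : ℝ) + m)) =O[atTop] fun _ => (1 : ℝ) := by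
  have hlim := (tendsto_one_div_atTop_nhds_zero_nat (𝕜 := ℝ)).comp (tendsto_add_atTop_nat m)
  exact (hlim.isBigO_one ℝ).congr_left fun n => by simp

lemma isBigO_log_sq_natCast : (fun n : ℕ => Real.log n ^ 2) =O[atTop] fun n => (n : ℝ) :=
  Real.isLittleO_pow_log_id_atTop.isBigO.comp_tendsto tendsto_natCast_atTop_atTop

lemma isBigO_one_natCast : (fun _ : ℕ => (1 : ℝ)) =O[atTop] fun n => (n : ℝ) :=
  ((isLittleO_const_id_atTop 1).comp_tendsto tendsto_natCast_atTop_atTop).isBigO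

lemma isBigO_H_sq : (fun n => H (n + 2) ^ 2) =O[atTop] fun n => (n : ℝ) := by
  have hbound : (fun n : ℕ => 2 * (H (n + 2) - Real.log n) ^ 2 + 2 * Real.log n ^ 2)
      =O[atTop] fun n => (n : ℝ) := by
    have hsq := (isBigO_H_sub_log.pow 2).const_mul_left 2
    simp only [one_pow] at hsq
    exact (hsq.trans isBigO_one_natCast).add (isBigO_log_sq_natCast.const_mul_left 2)
  refine (IsBigO.of_norm_le fun n => ?_).trans hbound
  rw [Real.norm_of_nonneg (sq_nonneg _)]
  simpa [mul_add] using add_sq_le (a := H (n + 2) - Real.log n) (b := Real.log n)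

lemma isBigO_H : (fun n => H (n + 2)) =O[atTop] fun n => (n : ℝ) :=
  ((isBigO_H_sub_log.trans isBigO_one_natCast).add isBigO_log_natCast).congr_left
    fun _ => sub_add_cancel _ _

lemma isBigO_one_div_mul :
    (fun n : ℕ => 1 / (((n : ℝ) + 1) * (n + 2))) =O[atTop] fun n => 1 / (n : ℝ) ^ 2 := by
  refine IsBigO.of_bound' ((eventually_gt_atTop 0).mono fun n hn => ?_)
  rw [Real.norm_of_nonneg (by positivity), Real.norm_of_nonneg (by positivity), sq]
  gcongr <;> linarith

lemma isBigO_one_div_sq_mul :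
    (fun n : ℕ => 1 / (((n : ℝ) + 1) ^ 2 * (n + 2))) =O[atTop] fun n => 1 / (n : ℝ) ^ 3 := by
  refine IsBigO.of_bound' ((eventually_gt_atTop 0).mono fun n hn => ?_)
  rw [Real.norm_of_nonneg (by positivity), Real.norm_of_nonneg (by positivity), pow_succ _ 2]
  gcongr <;> linarith

lemma isBigO_one_div_mul_sub_one_div_sq :
    (fun n : ℕ => 1 / (((n : ℝ) + 1) * (n + 2)) - 1 / (n : ℝ) ^ 2)
      =O[atTop] fun n => 1 / (n : ℝ) ^ 3 := by
  refine IsBigO.of_bound 3 ((eventually_gt_atTop 0).mono fun n hn => ?_)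
  have hn' : (0 : ℝ) < n := by exact_mod_cast hn
  have heq : 1 / (((n : ℝ) + 1) * (n + 2)) - 1 / (n : ℝ) ^ 2
      = -((3 * n + 2) / (((n : ℝ) + 1) * (n + 2)) * (1 / (n : ℝ) ^ 2)) := by
    field_simp
    ring
  have hle : (3 * n + 2) / (((n : ℝ) + 1) * (n + 2)) ≤ 3 / n := by
    rw [div_le_div_iff₀ (by positivity) hn']
    nlinarith
  rw [heq, norm_neg, Real.norm_of_nonneg (by positivity), Real.norm_of_nonneg (by positivity)]
  calc (3 * n + 2) / (((n : ℝ) + 1) * (n + 2)) * (1 / (n : ℝ) ^ 2)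
      ≤ 3 / n * (1 / (n : ℝ) ^ 2) := by gcongr
    _ = 3 * (1 / (n : ℝ) ^ 3) := by ring

lemma natCast_mul_one_div_pow_three (n : ℕ) : (n : ℝ) * (1 / (n : ℝ) ^ 3) = 1 / (n : ℝ) ^ 2 := by
  rcases eq_or_ne n 0 with rfl | hn
  · simp
  · field_simp

end Asymptotics

section Variance

open Filter Asymptotics

lemma integral_V (n : ℕ) :
    ∫ ω, V n ω ∂P n = 1 - (2 / 3 * H (n + 1) + 1 / 3) / (n + 1) := by
  have h := q_one_eq n
  simp only [q, Nat.choose_one_right, pow_one] at h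
  push_cast at h
  field_simp
  linear_combination 3 * h

lemma integral_V_sq (n : ℕ) :
    ∫ ω, V n ω ^ 2 ∂P n = 2 * q n 2 / ((n + 1) * (n + 2)) := by
  rw [q, Nat.cast_choose_two]
  push_cast
  field_simp
  ring

lemma variance_V_eq (n : ℕ) :
    ∫ ω, V n ω ^ 2 ∂P n - (∫ ω, V n ω ∂P n) ^ 2
      = (28 / 27 * H (n + 2) + 4 / 9 * H2 (n + 2) + 4 / 9 * (1 / (n + 3)) - 55 / 27)
          * (1 / ((n + 1) * (n + 2)))
        + (4 / 9 * H (n + 2) - 4 / 9 * H (n + 2) ^ 2 + 1 / 3 - 4 / 9 * (1 / (n + 2)))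
          * (1 / ((n + 1) ^ 2 * (n + 2))) := by
  have hH : H (n + 2) = H (n + 1) + 1 / (n + 2) := by
    rw [H_succ]
    push_cast
    ring
  rw [integral_V, integral_V_sq, two_mul_q_two_eq, eq_sub_of_add_eq hH.symm]
  field_simp
  ring

lemma isBigO_harmonic_error :
    (fun n : ℕ => 28 / 27 * (H (n + 2) - Real.log n) + 4 / 9 * H2 (n + 2)
        + 4 / 9 * (1 / (n + 3)) - 55 / 27)
      =O[atTop] fun _ => (1 : ℝ) :=
  (((isBigO_H_sub_log.const_mul_left _).add
    ((isBigO_H2.comp_tendsto (tendsto_add_atTop_nat 2)).const_mul_left _)).add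
    ((isBigO_one_div_natCast_add 3).const_mul_left _)).sub (isBigO_const_const _ one_ne_zero _)

lemma isBigO_harmonic_sq_error :
    (fun n : ℕ => 4 / 9 * H (n + 2) - 4 / 9 * H (n + 2) ^ 2 + 1 / 3 - 4 / 9 * (1 / (n + 2)))
      =O[atTop] fun n => (n : ℝ) :=
  (((isBigO_H.const_mul_left _).sub (isBigO_H_sq.const_mul_left _)).add
    ((isBigO_const_const _ one_ne_zero _).trans isBigO_one_natCast)).sub
    (((isBigO_one_div_natCast_add 2).const_mul_left _).trans isBigO_one_natCast)

theorem isBigO_variance_V_sub :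
    (fun n : ℕ => ∫ ω, V n ω ^ 2 ∂P n - (∫ ω, V n ω ∂P n) ^ 2
        - 28 / 27 * (Real.log n * (1 / (n : ℝ) ^ 2)))
      =O[atTop] fun n => 1 / (n : ℝ) ^ 2 := by
  have h1 := isBigO_harmonic_error.mul isBigO_one_div_mul
  have h2 := isBigO_harmonic_sq_error.mul isBigO_one_div_sq_mul
  have h3 := (isBigO_log_natCast.mul isBigO_one_div_mul_sub_one_div_sq).const_mul_left (28 / 27)
  simp only [one_mul, natCast_mul_one_div_pow_three] at h1 h2 h3
  refine ((h1.add h2).add h3).congr_left fun n => ?_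
  rw [variance_V_eq]
  ring

theorem isBigO_variance_volume_Tchain_sub :
    (fun n : ℕ => ((∫ ω, (volume (Tchain n ω)).toReal ^ 2 ∂P n)
        - (∫ ω, (volume (Tchain n ω)).toReal ∂P n) ^ 2) - 7 * Real.log n / (27 * (n : ℝ) ^ 2))
      =O[atTop] fun n => 1 / (n : ℝ) ^ 2 := by
  refine (isBigO_variance_V_sub.const_mul_left (1 / 4)).congr_left fun n => ?_
  simp only [V, mul_pow, integral_const_mul]
  ring

end Variance

/-- `var(vol(T_n)) = 7 log n / (27 n²) + O(n⁻²)`. -/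
theorem stmt18 :
    ∃ C > (0 : ℝ), ∃ n₀ : ℕ, ∀ n ≥ n₀,
      |((∫ ω, (volume (Tchain n ω)).toReal ^ 2 ∂ P n)
          - (∫ ω, (volume (Tchain n ω)).toReal ∂ P n) ^ 2)
        - 7 * Real.log n / (27 * (n : ℝ) ^ 2)| ≤ C / (n : ℝ) ^ 2 := by
  obtain ⟨C, hC, hbound⟩ := isBigO_variance_volume_Tchain_sub.exists_pos
  obtain ⟨n₀, hn₀⟩ := Filter.eventually_atTop.1 hbound.bound
  refine ⟨C, hC, n₀, fun n hn => ?_⟩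
  simpa [div_eq_mul_inv] using hn₀ n hn

end
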